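/- Let ω be a symplectic form on a finite-dimensional real Lie algebra 𝔤 and let J be an almost complex structure on 𝔤 compatible with ω, with associated metric g(X,Y) = ω(X,JY). If 𝔟 is a J-invariant ideal of 𝔤 contained in the center 𝒵, then 𝔟 is g-orthogonal to the subspace C¹𝔤 + J(C¹𝔤): g(C¹𝔤 + J(C¹𝔤), 𝔟) = 0. -/

import Mathlib

/-!
Evaluated on `X`, `Y` and a central `W`, the cocycle identity reduces to `ω ⁅X, Y⁆ W = 0`, so the
center is `ω`-orthogonal to `C¹𝔤`. Since `J` preserves `ω`, `g (J C) W = ω C W`, while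
`g A W = ω A (J W)`. Both vanish for `A, C ∈ C¹𝔤` because `W` and `J W` are central.
-/

section BilinearMap

variable {R E F : Type*} [CommSemiring R] [AddCommMonoid E] [Module R E]
  [AddCommMonoid F] [Module R F]

theorem le_orthogonalBilin_sup_map_compl₂ {ω : E →ₗ[R] E →ₗ[R] F} {J : E →ₗ[R] E}
    (hJ : ∀ X Y : E, ω (J X) (J Y) = ω X Y) {p b : Submodule R E}
    (hbJ : b ∈ Module.End.invtSubmodule J) (hbp : b ≤ p.orthogonalBilin ω) :
    b ≤ (p ⊔ p.map J).orthogonalBilin (ω.compl₂ J) := by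
  intro W hW U hU
  obtain ⟨A, hA, _, ⟨C, hC, rfl⟩, rfl⟩ := Submodule.mem_sup.mp hU
  have hAW : ω A (J W) = 0 := hbp (hbJ hW) A hA
  have hCW : ω (J C) (J W) = 0 := (hJ C W).trans (hbp hW C hC)
  rw [LinearMap.compl₂_apply, map_add, LinearMap.add_apply, hAW, hCW, add_zero]

end BilinearMap

section ClosedForm

variable {R L F : Type*} [CommRing R] [LieRing L] [LieAlgebra R L] [AddCommGroup F] [Module R F]
  {ω : L →ₗ[R] L →ₗ[R] F}

theorem apply_lie_eq_zero_of_mem_center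
    (hclosed : ∀ X Y Z : L, ω ⁅X, Y⁆ Z - ω ⁅X, Z⁆ Y + ω ⁅Y, Z⁆ X = 0)
    {W : L} (hW : W ∈ LieAlgebra.center R L) (X Y : L) : ω ⁅X, Y⁆ W = 0 := by
  have lie_W (Z : L) : ⁅Z, W⁆ = 0 := (LieModule.mem_maxTrivSubmodule R L L W).mp hW Z
  simpa [lie_W] using hclosed X Y W

theorem center_le_orthogonalBilin_lowerCentralSeries_one
    (hclosed : ∀ X Y Z : L, ω ⁅X, Y⁆ Z - ω ⁅X, Z⁆ Y + ω ⁅Y, Z⁆ X = 0) :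
    (LieAlgebra.center R L).toSubmodule ≤
      (LieModule.lowerCentralSeries R L L 1).toSubmodule.orthogonalBilin ω := by
  intro W hW
  suffices (LieModule.lowerCentralSeries R L L 1).toSubmodule ≤ LinearMap.ker (ω.flip W) from this
  rw [LieModule.lowerCentralSeries_succ, LieModule.lowerCentralSeries_zero,
    LieSubmodule.lieIdeal_oper_eq_linear_span', Submodule.span_le]
  rintro _ ⟨X, -, Y, -, rfl⟩
  exact apply_lie_eq_zero_of_mem_center hclosed hW X Y

theorem assoc_metric_derived_plus_J_derived_orthogonal_central_ideal_general
    (hclosed : ∀ X Y Z : L, ω ⁅X, Y⁆ Z - ω ⁅X, Z⁆ Y + ω ⁅Y, Z⁆ X = 0)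
    {J : L →ₗ[R] L} (hJ : ∀ X Y : L, ω (J X) (J Y) = ω X Y)
    {b : Submodule R L} (hbJ : b ∈ Module.End.invtSubmodule J)
    (hbZ : b ≤ (LieAlgebra.center R L).toSubmodule) :
    b ≤ ((LieModule.lowerCentralSeries R L L 1).toSubmodule ⊔
      (LieModule.lowerCentralSeries R L L 1).toSubmodule.map J).orthogonalBilin (ω.compl₂ J) :=
  le_orthogonalBilin_sup_map_compl₂ hJ hbJ <|
    hbZ.trans <| center_le_orthogonalBilin_lowerCentralSeries_one hclosed

end ClosedForm

/-- If 𝔟 is a J-invariant ideal contained in the center 𝒵, then 𝔟 is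
orthogonal to the subspace C¹𝔤 + J(C¹𝔤) with respect to the associated metric
g(X,Y) = ω(X,JY). -/
theorem assoc_metric_derived_plus_J_derived_orthogonal_central_ideal
    (L : Type) [LieRing L] [LieAlgebra ℝ L] [FiniteDimensional ℝ L]
    (ω : LinearMap.BilinForm ℝ L)
    (halt : ∀ X : L, ω X X = 0)
    (hnondeg : ∀ X : L, (∀ Y : L, ω X Y = 0) → X = 0)
    (hclosed : ∀ X Y Z : L, ω ⁅X, Y⁆ Z - ω ⁅X, Z⁆ Y + ω ⁅Y, Z⁆ X = 0)
    (J : L →ₗ[ℝ] L)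
    (hJ2 : ∀ X : L, J (J X) = -X)
    (hcompat : ∀ X Y : L, ω (J X) (J Y) = ω X Y)
    (g : L → L → ℝ) (hg : ∀ X Y : L, g X Y = ω X (J Y))
    (b : LieIdeal ℝ L)
    (hbJ : ∀ x ∈ b, J x ∈ b)
    (hbZ : b ≤ LieAlgebra.center ℝ L) :
    ∀ U ∈ (LieModule.lowerCentralSeries ℝ L L 1).toSubmodule ⊔
        Submodule.map J (LieModule.lowerCentralSeries ℝ L L 1).toSubmodule,
      ∀ W ∈ b, g U W = 0 := by
  intro U hU W hW
  rw [hg]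
  exact assoc_metric_derived_plus_J_derived_orthogonal_central_ideal_general
    hclosed hcompat hbJ hbZ hW U hU
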